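/- Let (S,d) be a complete separable metric space and let {P_λ : λ ∈ Λ} be a family of regular Markov operators on S with dual operators U_λ. Then the following are equivalent: (i) for every f ∈ BL(S), the family {U_λ f : λ ∈ Λ} of functions S → ℝ is equicontinuous; (ii) the family {P_λ : λ ∈ Λ}, viewed as maps from M⁺(S) with the metric induced by ‖·‖*_BL to itself, is equicontinuous; (iii) the family {P_λ : λ ∈ Λ}, restricted to the Borel probability measures P(S) equipped with the topology of weak (narrow) convergence, and with values in P(S) with the metric induced by ‖·‖*_BL, is equicontinuous. -/

import Mathlib

open MeasureTheory Filter Topology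

/-- A function is bounded Lipschitz. -/
def IsBL {S : Type*} [PseudoMetricSpace S] (f : S → ℝ) : Prop :=
  (∃ C : ℝ, ∀ x, |f x| ≤ C) ∧ ∃ K : NNReal, LipschitzWith K f

/-- Pairing of a finite signed Borel measure with a function, via the Jordan decomposition. -/
noncomputable def pairing {S : Type*} [MeasurableSpace S] (μ : SignedMeasure S) (f : S → ℝ) : ℝ :=
  (∫ x, f x ∂μ.toJordanDecomposition.posPart) - ∫ x, f x ∂μ.toJordanDecomposition.negPart

/-- Dual bounded Lipschitz norm on signed measures. -/
noncomputable def blDualNorm {S : Type*} [PseudoMetricSpace S] [MeasurableSpace S]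
    (μ : SignedMeasure S) : ℝ :=
  sSup {r : ℝ | ∃ (f : S → ℝ) (C : ℝ) (K : NNReal), (∀ x, |f x| ≤ C) ∧
    LipschitzWith K f ∧ C + (K : ℝ) ≤ 1 ∧ r = |pairing μ f|}

/-- The metric induced by `‖·‖*_BL` on finite positive Borel measures. -/
noncomputable def blDist {S : Type*} [PseudoMetricSpace S] [MeasurableSpace S]
    (μ ν : FiniteMeasure S) : ℝ :=
  blDualNorm ((μ : Measure S).toSignedMeasure - (ν : Measure S).toSignedMeasure)

/-!
Equicontinuity is tested on Dirac masses to obtain (i) from (ii) or (iii). The converse rests on a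
Schur-type property of measures on a separable pseudometric space: if `∫ f dαₙ - ∫ f dβₙ → 0` for
every bounded Lipschitz `f` and the masses stay bounded, then `‖αₙ - βₙ‖*_BL → 0`.

For the Schur property, the ball of `K`-Lipschitz functions bounded by `1` is compact and
metrizable for pointwise convergence, and integration is continuous on it. By Baire, for some `f₀`
and some finite set `A`, the integrals `∫ h dαₙ - ∫ h dβₙ` are eventually small, uniformly over the
`h` in the ball that agree with `f₀` on `A`. A `1`-Lipschitz `f` can be spliced into such an `h`
without changing it at distance `≥ r` from `A`. The splicing is nonexpansive in `f`, and near `A`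
the function `f` is determined up to `O(r)` by its values on `A`, so finitely many `f` suffice.

The same property shows that weak convergence `μₙ → μ` is uniform over a bounded equicontinuous
family `(gᵢ)`: push the measures forward along `x ↦ (gᵢ x)ᵢ` into a separable subset of `ℓ^∞`, where
the `gᵢ` become coordinates, which are `1`-Lipschitz. Applied to `gₙ = U_{λₙ} f`, this gives
`∫ f d(P_{λₙ} μₙ) - ∫ f d(P_{λₙ} μ) → 0`, and the Schur property upgrades it to the dual norm.
-/

open Set TopologicalSpace
open scoped NNReal

section Integral

variable {X : Type*} [MeasurableSpace X] {f : X → ℝ} {C : ℝ}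

lemma integrable_of_measurable_of_abs_le (hf : Measurable f) (hC : ∀ x, |f x| ≤ C) (μ : Measure X)
    [IsFiniteMeasure μ] : Integrable f μ :=
  .of_bound hf.aestronglyMeasurable C (ae_of_all _ hC)

lemma abs_integral_le_mul_mass (hC : ∀ x, |f x| ≤ C) (μ : FiniteMeasure X) :
    |∫ x, f x ∂(μ : Measure X)| ≤ C * μ.mass :=
  norm_integral_le_of_norm_le_const (μ := (μ : Measure X)) (f := f) (ae_of_all _ hC)

lemma abs_integral_sub_le_mul_mass (hC : ∀ x, |f x| ≤ C) (μ ν : FiniteMeasure X) :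
    |∫ x, f x ∂(μ : Measure X) - ∫ x, f x ∂(ν : Measure X)| ≤ C * (μ.mass + ν.mass) :=
  (abs_sub _ _).trans <| by
    linarith [abs_integral_le_mul_mass hC μ, abs_integral_le_mul_mass hC ν]

lemma pairing_toSignedMeasure_sub (hf : Measurable f) (hC : ∀ x, |f x| ≤ C) (μ ν : Measure X)
    [IsFiniteMeasure μ] [IsFiniteMeasure ν] :
    pairing (μ.toSignedMeasure - ν.toSignedMeasure) f = ∫ x, f x ∂μ - ∫ x, f x ∂ν := by
  let j := (μ.toSignedMeasure - ν.toSignedMeasure).toJordanDecomposition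
  have parts_sub : j.posPart.toSignedMeasure - j.negPart.toSignedMeasure =
      μ.toSignedMeasure - ν.toSignedMeasure :=
    SignedMeasure.toSignedMeasure_toJordanDecomposition _
  have parts_add : j.posPart + ν = μ + j.negPart := by
    rw [← Measure.toSignedMeasure_eq_toSignedMeasure_iff, Measure.toSignedMeasure_add,
      Measure.toSignedMeasure_add]
    exact sub_eq_sub_iff_add_eq_add.1 parts_sub
  have integrable (τ : Measure X) [IsFiniteMeasure τ] := integrable_of_measurable_of_abs_le hf hC τ
  rw [pairing, sub_eq_sub_iff_add_eq_add, ← integral_add_measure (integrable _) (integrable _),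
    ← integral_add_measure (integrable _) (integrable _)]
  exact congrArg (fun τ => ∫ x, f x ∂τ) parts_add

lemma integral_diracProba (hf : Measurable f) (x : X) :
    ∫ y, f y ∂((diracProba x).toFiniteMeasure : Measure X) = f x :=
  integral_dirac' _ _ hf.stronglyMeasurable

lemma integral_normalize [Nonempty X] {ν : FiniteMeasure X} (hν : ν ≠ 0) (f : X → ℝ) :
    ∫ x, f x ∂(ν.normalize : Measure X) = (ν.mass : ℝ)⁻¹ * ∫ x, f x ∂(ν : Measure X) := by
  rw [ν.toMeasure_normalize_eq_of_nonzero hν, integral_smul_nnreal_measure]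
  simp [NNReal.smul_def]

end Integral

section DualNorm

variable {S : Type*} [PseudoMetricSpace S] [MeasurableSpace S]

lemma blDist_nonneg (μ ν : FiniteMeasure S) : 0 ≤ blDist μ ν := by
  refine Real.sSup_nonneg ?_
  rintro _ ⟨f, C, K, -, -, -, rfl⟩
  exact abs_nonneg _

variable [OpensMeasurableSpace S] {f : S → ℝ}

lemma IsBL.integrable (hf : IsBL f) (μ : Measure S) [IsFiniteMeasure μ] : Integrable f μ := by
  obtain ⟨⟨C, hC⟩, K, hK⟩ := hf
  exact integrable_of_measurable_of_abs_le hK.continuous.measurable hC μ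

lemma blDist_le {μ ν : FiniteMeasure S} {b : ℝ} (hb : 0 ≤ b)
    (h : ∀ f : S → ℝ, (∀ x, |f x| ≤ 1) → LipschitzWith 1 f →
      |∫ x, f x ∂(μ : Measure S) - ∫ x, f x ∂(ν : Measure S)| ≤ b) :
    blDist μ ν ≤ b := by
  refine Real.sSup_le ?_ hb
  rintro _ ⟨f, C, K, hC, hK, hCK, rfl⟩
  rw [pairing_toSignedMeasure_sub hK.continuous.measurable hC]
  refine h f (fun x => (hC x).trans (by linarith [K.coe_nonneg])) fun x y => ?_
  have hK_le_one : K ≤ 1 := by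
    rw [← NNReal.coe_le_coe, NNReal.coe_one]
    linarith [(abs_nonneg _).trans (hC x)]
  exact hK.weaken hK_le_one x y

lemma bddAbove_blDist (μ ν : FiniteMeasure S) :
    BddAbove {r : ℝ | ∃ (f : S → ℝ) (C : ℝ) (K : ℝ≥0), (∀ x, |f x| ≤ C) ∧ LipschitzWith K f ∧
      C + (K : ℝ) ≤ 1 ∧
      r = |pairing ((μ : Measure S).toSignedMeasure - (ν : Measure S).toSignedMeasure) f|} := by
  refine ⟨μ.mass + ν.mass, ?_⟩
  rintro _ ⟨f, C, K, hC, hK, hCK, rfl⟩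
  have hf_le_one (x : S) : |f x| ≤ 1 := (hC x).trans (by linarith [K.coe_nonneg])
  rw [pairing_toSignedMeasure_sub hK.continuous.measurable hC]
  simpa using abs_integral_sub_le_mul_mass hf_le_one μ ν

lemma abs_integral_sub_le_mul_blDist {C s : ℝ} {K : ℝ≥0} (hC : ∀ x, |f x| ≤ C)
    (hK : LipschitzWith K f) (hs : 0 < s) (hCK : C + K ≤ s) (μ ν : FiniteMeasure S) :
    |∫ x, f x ∂(μ : Measure S) - ∫ x, f x ∂(ν : Measure S)| ≤ s * blDist μ ν := by
  have abs_scaled (x : S) : |s⁻¹ * f x| ≤ s⁻¹ * C := by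
    rw [abs_mul, abs_of_pos (inv_pos.2 hs)]
    exact mul_le_mul_of_nonneg_left (hC x) (inv_pos.2 hs).le
  have lipschitz_scaled : LipschitzWith (‖s⁻¹‖₊ * K) fun x => s⁻¹ * f x :=
    (lipschitzWith_smul s⁻¹).comp hK
  have budget : s⁻¹ * C + (‖s⁻¹‖₊ * K : ℝ≥0) ≤ 1 := by
    rw [NNReal.coe_mul, coe_nnnorm, Real.norm_of_nonneg (inv_pos.2 hs).le, ← mul_add,
      inv_mul_le_iff₀ hs, mul_one]
    exact hCK
  have le_sup := le_csSup (bddAbove_blDist μ ν)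
    ⟨fun x => s⁻¹ * f x, _, _, abs_scaled, lipschitz_scaled, budget, rfl⟩
  rwa [pairing_toSignedMeasure_sub lipschitz_scaled.continuous.measurable abs_scaled,
    integral_const_mul, integral_const_mul, ← mul_sub, abs_mul, abs_of_pos (inv_pos.2 hs),
    inv_mul_le_iff₀ hs] at le_sup

lemma IsBL.exists_abs_integral_sub_le_mul_blDist (hf : IsBL f) :
    ∃ s : ℝ, 0 < s ∧ ∀ μ ν : FiniteMeasure S,
      |∫ x, f x ∂(μ : Measure S) - ∫ x, f x ∂(ν : Measure S)| ≤ s * blDist μ ν := by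
  obtain ⟨⟨C, hC⟩, K, hK⟩ := hf
  have hs : 0 < |C| + K + 1 := by positivity
  exact ⟨_, hs, abs_integral_sub_le_mul_blDist hC hK hs (by linarith [le_abs_self C])⟩

lemma blDist_diracProba_le_dist (x y : S) :
    blDist (diracProba x).toFiniteMeasure (diracProba y).toFiniteMeasure ≤ dist x y := by
  refine blDist_le dist_nonneg fun f _ hf => ?_
  rw [integral_diracProba hf.continuous.measurable, integral_diracProba hf.continuous.measurable]
  simpa [Real.dist_eq] using hf.dist_le_mul x y

end DualNorm

section WeakConvergence

variable {S : Type*} [PseudoMetricSpace S] [MeasurableSpace S] {ι : Type*}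
  {L : Filter ι} {μs : ι → FiniteMeasure S} {μ : FiniteMeasure S}

lemma tendsto_mass_of_forall_isBL_integral_tendsto
    (h : ∀ f : S → ℝ, IsBL f →
      Tendsto (fun i => ∫ x, f x ∂(μs i : Measure S)) L (𝓝 (∫ x, f x ∂(μ : Measure S)))) :
    Tendsto (fun i => (μs i).mass) L (𝓝 μ.mass) := by
  have tendsto_one := h (fun _ => 1) ⟨⟨1, by simp⟩, 0, .const 1⟩
  simp only [integral_const, smul_eq_mul, mul_one] at tendsto_one
  exact NNReal.tendsto_coe.1 tendsto_one

variable [OpensMeasurableSpace S]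

lemma tendsto_of_forall_isBL_integral_tendsto [L.IsCountablyGenerated]
    (h : ∀ f : S → ℝ, IsBL f →
      Tendsto (fun i => ∫ x, f x ∂(μs i : Measure S)) L (𝓝 (∫ x, f x ∂(μ : Measure S)))) :
    Tendsto μs L (𝓝 μ) := by
  have tendsto_mass := tendsto_mass_of_forall_isBL_integral_tendsto h
  rcases eq_or_ne μ 0 with rfl | hμ
  · exact FiniteMeasure.tendsto_zero_of_tendsto_zero_mass (by simpa using tendsto_mass)
  have : Nonempty S := by
    by_contra hS
    rw [not_nonempty_iff] at hS
    exact hμ (Subtype.ext (Measure.eq_zero_of_isEmpty _))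
  have mass_ne_zero : μ.mass ≠ 0 := μ.mass_nonzero_iff.2 hμ
  refine FiniteMeasure.tendsto_of_tendsto_normalize_testAgainstNN_of_tendsto_mass ?_ tendsto_mass
  rw [tendsto_iff_forall_lipschitz_integral_tendsto]
  rintro f hf_bdd ⟨K, hK⟩
  let fb : BoundedContinuousFunction S ℝ := ⟨⟨f, hK.continuous⟩, hf_bdd⟩
  have hf : IsBL f := ⟨⟨‖fb‖, fb.norm_coe_le_norm⟩, K, hK⟩
  rw [integral_normalize hμ]
  refine (((NNReal.tendsto_coe.2 tendsto_mass).inv₀ (by exact_mod_cast mass_ne_zero)).mul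
    (h f hf)).congr' ?_
  filter_upwards [tendsto_mass.eventually_ne mass_ne_zero] with i hi
  exact (integral_normalize ((μs i).mass_nonzero_iff.1 hi) f).symm

lemma tendsto_of_tendsto_blDist_zero [L.IsCountablyGenerated]
    (h : Tendsto (fun i => blDist (μs i) μ) L (𝓝 0)) : Tendsto μs L (𝓝 μ) := by
  refine tendsto_of_forall_isBL_integral_tendsto fun f hf => ?_
  obtain ⟨s, -, hs⟩ := hf.exists_abs_integral_sub_le_mul_blDist
  rw [tendsto_iff_dist_tendsto_zero]
  exact squeeze_zero (fun _ => dist_nonneg) (fun i => hs (μs i) μ) (by simpa using h.const_mul s)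

end WeakConvergence

section LipschitzUnitBall

variable {S : Type*} [PseudoMetricSpace S] {K : ℝ≥0} {f g : S → ℝ}

/-- The `K`-Lipschitz functions `S → ℝ` with values in `[-1, 1]`, as a subset of the product space
`S → ℝ`, so that its topology is that of pointwise convergence. -/
def lipschitzUnitBall (S : Type*) [PseudoMetricSpace S] (K : ℝ≥0) : Set (S → ℝ) :=
  {f | (∀ x, |f x| ≤ 1) ∧ LipschitzWith K f}

lemma isBL_of_mem_lipschitzUnitBall (hf : f ∈ lipschitzUnitBall S K) : IsBL f :=
  ⟨⟨1, hf.1⟩, K, hf.2⟩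

lemma isCompact_lipschitzUnitBall : IsCompact (lipschitzUnitBall S K) := by
  have compact_box : IsCompact {f : S → ℝ | ∀ x, f x ∈ Icc (-1 : ℝ) 1} :=
    isCompact_pi_infinite fun _ => isCompact_Icc
  convert compact_box.inter_right (isClosed_setOfPred_lipschitzWith K) using 1
  ext f
  simp [lipschitzUnitBall, abs_le]

instance : CompactSpace (lipschitzUnitBall S K) :=
  isCompact_iff_compactSpace.1 isCompact_lipschitzUnitBall

instance : Nonempty (lipschitzUnitBall S K) :=
  ⟨0, by simp, LipschitzWith.const' 0⟩

-- Evaluation on a countable dense set embeds the ball into a countable power of `ℝ`.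
instance [SeparableSpace S] : FirstCountableTopology (lipschitzUnitBall S K) := by
  obtain ⟨D, hD_countable, hD_dense⟩ := exists_countable_dense S
  have := hD_countable.to_subtype
  let restrict (f : lipschitzUnitBall S K) (a : D) : ℝ := f.1 a
  have continuous_restrict : Continuous restrict :=
    continuous_pi fun a => (continuous_apply a.1).comp continuous_subtype_val
  have injective_restrict : Function.Injective restrict := fun f g hfg =>
    Subtype.ext <| Continuous.ext_on hD_dense f.2.2.continuous g.2.2.continuous
      fun a ha => congrFun hfg ⟨a, ha⟩
  exact (continuous_restrict.isClosedEmbedding injective_restrict).isInducing.firstCountableTopology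

lemma continuous_integral_lipschitzUnitBall [SeparableSpace S] [MeasurableSpace S]
    [OpensMeasurableSpace S] (μ : Measure S) [IsFiniteMeasure μ] :
    Continuous fun f : lipschitzUnitBall S K => ∫ x, f.1 x ∂μ :=
  continuous_of_dominated (fun f => f.2.2.continuous.aestronglyMeasurable)
    (fun f => ae_of_all _ f.2.1) (integrable_const 1)
    (ae_of_all _ fun x => (continuous_apply x).comp continuous_subtype_val)

lemma exists_finite_net_lipschitzUnitBall {A : Set S} (hA : A.Finite) {r : ℝ} (hr : 0 < r) :
    ∃ T : Set (S → ℝ), T.Finite ∧ T ⊆ lipschitzUnitBall S K ∧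
      ∀ f ∈ lipschitzUnitBall S K, ∃ g ∈ T, ∀ a ∈ A, |f a - g a| < r := by
  have nhds_of_close (g : S → ℝ) : {f : S → ℝ | ∀ a ∈ A, |f a - g a| < r} ∈ 𝓝 g := by
    refine (hA.eventually_all).2 fun a _ => ?_
    exact (continuous_apply a).continuousAt (Metric.ball_mem_nhds (g a) hr)
  obtain ⟨T, hT_subset, hT_cover⟩ := isCompact_lipschitzUnitBall.elim_nhds_subcover
    (fun g : S → ℝ => {f | ∀ a ∈ A, |f a - g a| < r}) fun g _ => nhds_of_close g
  exact ⟨T, T.finite_toSet, hT_subset, fun f hf => by simpa using hT_cover hf⟩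

end LipschitzUnitBall

section Baire

lemma exists_nonempty_interior_forall_abs_le {X : Type*} [TopologicalSpace X] [BaireSpace X]
    [Nonempty X] {φ : ℕ → X → ℝ} (hφ : ∀ n, Continuous (φ n))
    (hφ_lim : ∀ x, Tendsto (fun n => φ n x) atTop (𝓝 0)) {ε : ℝ} (hε : 0 < ε) :
    ∃ N, (interior {x | ∀ n ≥ N, |φ n x| ≤ ε}).Nonempty := by
  refine nonempty_interior_of_iUnion_of_closed (fun N => ?_) (eq_univ_of_forall fun x => ?_)
  · simp only [ofPred_forall]
    exact isClosed_biInter fun n _ => isClosed_le (hφ n).abs continuous_const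
  · have eventually_le : ∀ᶠ n in atTop, |φ n x| ≤ ε := by
      simpa using (hφ_lim x).abs.eventually_le_const (by simpa using hε)
    exact mem_iUnion.2 (eventually_atTop.1 eventually_le)

lemma exists_finite_forall_eqOn_mem_of_mem_nhds {X Y : Type*} [TopologicalSpace Y] {f₀ : X → Y}
    {V : Set (X → Y)} (hV : V ∈ 𝓝 f₀) :
    ∃ A : Set X, A.Finite ∧ ∀ f, EqOn f f₀ A → f ∈ V := by
  rw [nhds_pi, Filter.mem_pi] at hV
  obtain ⟨A, hA, t, ht, htV⟩ := hV
  exact ⟨A, hA, fun f hf => htV fun a ha => hf ha ▸ mem_of_mem_nhds (ht a)⟩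

variable {S : Type*} [PseudoMetricSpace S] [SeparableSpace S] [MeasurableSpace S]
  [OpensMeasurableSpace S]

lemma exists_finite_forall_eqOn_abs_integral_sub_le {α β : ℕ → FiniteMeasure S}
    (h : ∀ f : S → ℝ, IsBL f → Tendsto
      (fun n => ∫ x, f x ∂(α n : Measure S) - ∫ x, f x ∂(β n : Measure S)) atTop (𝓝 0))
    (K : ℝ≥0) {ε : ℝ} (hε : 0 < ε) :
    ∃ f₀ ∈ lipschitzUnitBall S K, ∃ A : Set S, A.Finite ∧ ∀ᶠ n in atTop,
      ∀ f ∈ lipschitzUnitBall S K, EqOn f f₀ A →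
        |∫ x, f x ∂(α n : Measure S) - ∫ x, f x ∂(β n : Measure S)| ≤ ε := by
  obtain ⟨N, f₀, hf₀⟩ := exists_nonempty_interior_forall_abs_le
    (fun n => (continuous_integral_lipschitzUnitBall (K := K) (α n : Measure S)).sub
      (continuous_integral_lipschitzUnitBall (β n : Measure S)))
    (fun f => h f.1 (isBL_of_mem_lipschitzUnitBall f.2)) hε
  obtain ⟨V, hV, hV_subset⟩ := mem_nhds_subtype _ _ _ |>.1 (mem_interior_iff_mem_nhds.1 hf₀)
  obtain ⟨A, hA, hAV⟩ := exists_finite_forall_eqOn_mem_of_mem_nhds hV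
  refine ⟨f₀, f₀.2, A, hA, eventually_atTop.2 ⟨N, fun n hn f hf hfA => ?_⟩⟩
  exact hV_subset (a := ⟨f, hf⟩) (hAV f hfA) n hn

end Baire

section Splice

/-- The function `f` clamped to the interval `[min f₀ (2 * θ - 1), max f₀ (1 - 2 * θ)]`. Where
`θ = 1` the interval is `{f₀}`, and where `θ = 0` it contains `[-1, 1]`, so for a cutoff `θ` this
interpolates between `f₀` and `f`. Unlike for a convex combination, the Lipschitz constant is the
largest of those of `f₀`, `f` and `2 * θ`. -/
def splice {X : Type*} (f₀ θ f : X → ℝ) (x : X) : ℝ :=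
  max (min (f₀ x) (2 * θ x - 1)) (min (f x) (max (f₀ x) (1 - 2 * θ x)))

section Pointwise

variable {X : Type*} {f₀ θ f g : X → ℝ} {x : X}

lemma splice_eq_left (hf₀ : |f₀ x| ≤ 1) (hθ : θ x = 1) : splice f₀ θ f x = f₀ x := by
  rw [abs_le] at hf₀
  norm_num [splice, hθ, hf₀.1, hf₀.2]

lemma splice_eq_right (hf₀ : |f₀ x| ≤ 1) (hf : |f x| ≤ 1) (hθ : θ x = 0) :
    splice f₀ θ f x = f x := by
  rw [abs_le] at hf₀ hf
  norm_num [splice, hθ, hf₀.1, hf₀.2, hf.1, hf.2]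

lemma abs_splice_le (hf₀ : |f₀ x| ≤ 1) (hf : |f x| ≤ 1) : |splice f₀ θ f x| ≤ 1 := by
  rw [abs_le] at hf₀ hf ⊢
  exact ⟨le_max_of_le_right (le_min hf.1 (le_max_of_le_left hf₀.1)),
    max_le (min_le_of_left_le hf₀.2) (min_le_of_left_le hf.2)⟩

lemma abs_splice_sub_splice_le : |splice f₀ θ f x - splice f₀ θ g x| ≤ |f x - g x| := by
  refine (abs_max_sub_max_le_max _ _ _ _).trans (max_le (by simp) ?_)
  exact (abs_min_sub_min_le_max _ _ _ _).trans (max_le le_rfl (by simp))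

end Pointwise

variable {S : Type*} [PseudoMetricSpace S] {f₀ θ f g : S → ℝ} {K L : ℝ≥0}

lemma splice_mem_lipschitzUnitBall (hf₀ : f₀ ∈ lipschitzUnitBall S K)
    (hf : f ∈ lipschitzUnitBall S K) (hθ : LipschitzWith L θ) (hLK : 2 * L ≤ K) :
    splice f₀ θ f ∈ lipschitzUnitBall S K := by
  have lipschitz_two_mul : LipschitzWith K fun x => 2 * θ x := by
    refine LipschitzWith.weaken (K := ‖(2 : ℝ)‖₊ * L) ((lipschitzWith_smul (2 : ℝ)).comp hθ) ?_
    simpa using hLK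
  have lipschitz_lower : LipschitzWith K fun x => 2 * θ x - 1 := by
    simpa using lipschitz_two_mul.sub (.const 1)
  have lipschitz_upper : LipschitzWith K fun x => 1 - 2 * θ x := by
    simpa using (LipschitzWith.const (1 : ℝ)).sub lipschitz_two_mul
  refine ⟨fun x => abs_splice_le (hf₀.1 x) (hf.1 x), ?_⟩
  simpa only [max_self] using! (hf₀.2.min lipschitz_lower).max
    (hf.2.min (hf₀.2.max lipschitz_upper))

lemma abs_sub_sub_splice_sub_splice_le {A : Set S} {r : ℝ} (hr : 0 ≤ r)
    (hf₀ : ∀ x, |f₀ x| ≤ 1) (hf : f ∈ lipschitzUnitBall S 1) (hg : g ∈ lipschitzUnitBall S 1)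
    (hfg : ∀ a ∈ A, |f a - g a| < r) (hθ : ∀ x ∉ Metric.thickening r A, θ x = 0) (x : S) :
    |(f x - g x) - (splice f₀ θ f x - splice f₀ θ g x)| ≤ 6 * r := by
  by_cases hx : x ∈ Metric.thickening r A
  · obtain ⟨a, ha, hxa⟩ := Metric.mem_thickening_iff.1 hx
    have sub_near : |f x - g x| ≤ 3 * r := by
      have hf_near : |f x - f a| ≤ dist x a := by simpa using! hf.2.dist_le_mul x a
      have hg_near : |g x - g a| ≤ dist x a := by simpa using! hg.2.dist_le_mul x a
      grind
    refine (abs_sub _ _).trans ?_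
    linarith [abs_splice_sub_splice_le (f₀ := f₀) (θ := θ) (f := f) (g := g) (x := x)]
  · rw [splice_eq_right (hf₀ x) (hf.1 x) (hθ x hx), splice_eq_right (hf₀ x) (hg.1 x) (hθ x hx),
      sub_self, abs_zero]
    positivity

lemma exists_lipschitzWith_cutoff (A : Set S) {r : ℝ} (hr : 0 < r) :
    ∃ θ : S → ℝ, LipschitzWith r.toNNReal⁻¹ θ ∧ (∀ x ∈ A, θ x = 1) ∧
      ∀ x ∉ Metric.thickening r A, θ x = 0 :=
  ⟨fun x => thickenedIndicator hr A x, lipschitzWith_thickenedIndicator hr A,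
    fun x hx => by simp [thickenedIndicator_one hr A hx],
    fun x hx => by simp [thickenedIndicator_zero hr A hx]⟩

end Splice

section Schur

variable {S : Type*} [PseudoMetricSpace S] [MeasurableSpace S] [OpensMeasurableSpace S]

lemma abs_integral_sub_le_of_abs_sub_sub_sub_le {f g f' g' : S → ℝ} (hf : IsBL f) (hg : IsBL g)
    (hf' : IsBL f') (hg' : IsBL g') {c : ℝ} (hc : ∀ x, |(f x - g x) - (f' x - g' x)| ≤ c)
    (μ ν : FiniteMeasure S) :
    |∫ x, f x ∂(μ : Measure S) - ∫ x, f x ∂(ν : Measure S)| ≤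
      |∫ x, g x ∂(μ : Measure S) - ∫ x, g x ∂(ν : Measure S)| +
      |∫ x, f' x ∂(μ : Measure S) - ∫ x, f' x ∂(ν : Measure S)| +
      |∫ x, g' x ∂(μ : Measure S) - ∫ x, g' x ∂(ν : Measure S)| + c * (μ.mass + ν.mass) := by
  have integral_defect (τ : Measure S) [IsFiniteMeasure τ] :
      ∫ x, ((f x - g x) - (f' x - g' x)) ∂τ =
        (∫ x, f x ∂τ - ∫ x, g x ∂τ) - (∫ x, f' x ∂τ - ∫ x, g' x ∂τ) := by
    rw [← integral_sub (hf.integrable τ) (hg.integrable τ),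
      ← integral_sub (hf'.integrable τ) (hg'.integrable τ)]
    exact integral_sub ((hf.integrable τ).sub (hg.integrable τ))
      ((hf'.integrable τ).sub (hg'.integrable τ))
  have defect_le := abs_integral_sub_le_mul_mass hc μ ν
  rw [integral_defect, integral_defect] at defect_le
  grind

variable [SeparableSpace S] {α β : ℕ → FiniteMeasure S}

lemma exists_splice_abs_integral_sub_le
    (h : ∀ f : S → ℝ, IsBL f → Tendsto
      (fun n => ∫ x, f x ∂(α n : Measure S) - ∫ x, f x ∂(β n : Measure S)) atTop (𝓝 0))
    {r ε : ℝ} (hr : 0 < r) (hε : 0 < ε) :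
    ∃ (f₀ θ : S → ℝ) (A : Set S), A.Finite ∧ (∀ x, |f₀ x| ≤ 1) ∧
      (∀ x ∉ Metric.thickening r A, θ x = 0) ∧
      (∀ f ∈ lipschitzUnitBall S 1, IsBL (splice f₀ θ f)) ∧
      ∀ᶠ n in atTop, ∀ f ∈ lipschitzUnitBall S 1,
        |∫ x, splice f₀ θ f x ∂(α n : Measure S) - ∫ x, splice f₀ θ f x ∂(β n : Measure S)| ≤
          ε := by
  let K : ℝ≥0 := max 1 (2 * r.toNNReal⁻¹)
  obtain ⟨f₀, hf₀, A, hA, small_of_eqOn⟩ := exists_finite_forall_eqOn_abs_integral_sub_le h K hε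
  obtain ⟨θ, hθ_lip, hθ_one, hθ_zero⟩ := exists_lipschitzWith_cutoff A hr
  have splice_mem (f : S → ℝ) (hf : f ∈ lipschitzUnitBall S 1) :
      splice f₀ θ f ∈ lipschitzUnitBall S K :=
    splice_mem_lipschitzUnitBall hf₀ ⟨hf.1, hf.2.weaken (le_max_left _ _)⟩ hθ_lip (le_max_right _ _)
  refine ⟨f₀, θ, A, hA, hf₀.1, hθ_zero,
    fun f hf => isBL_of_mem_lipschitzUnitBall (splice_mem f hf), ?_⟩
  filter_upwards [small_of_eqOn] with n hn f hf
  exact hn _ (splice_mem f hf) fun a ha => splice_eq_left (hf₀.1 a) (hθ_one a ha)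

lemma eventually_blDist_le {M : ℝ≥0} (hM : ∀ n, (α n).mass + (β n).mass ≤ M)
    (h : ∀ f : S → ℝ, IsBL f → Tendsto
      (fun n => ∫ x, f x ∂(α n : Measure S) - ∫ x, f x ∂(β n : Measure S)) atTop (𝓝 0))
    {ε : ℝ} (hε : 0 < ε) : ∀ᶠ n in atTop, blDist (α n) (β n) ≤ 9 * ε := by
  obtain ⟨r, hr, hrM⟩ : ∃ r > 0, r * (M : ℝ) ≤ ε :=
    ⟨ε / (M + 1), by positivity, by rw [div_mul_eq_mul_div, div_le_iff₀ (by positivity)]; linarith⟩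
  obtain ⟨f₀, θ, A, hA, hf₀, hθ, isBL_splice, small_splice⟩ :=
    exists_splice_abs_integral_sub_le h hr hε
  obtain ⟨T, hT, hT_ball, hT_net⟩ := exists_finite_net_lipschitzUnitBall (K := 1) hA hr
  have small_on_net : ∀ᶠ n in atTop, ∀ g ∈ T,
      |∫ x, g x ∂(α n : Measure S) - ∫ x, g x ∂(β n : Measure S)| ≤ ε :=
    hT.eventually_all.2 fun g hg => by
      simpa using (h g (isBL_of_mem_lipschitzUnitBall (hT_ball hg))).abs.eventually_le_const
        (by simpa using hε)
  filter_upwards [small_splice, small_on_net] with n hn_splice hn_net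
  refine blDist_le (by positivity) fun f hf_le hf_lip => ?_
  have hf : f ∈ lipschitzUnitBall S 1 := ⟨hf_le, hf_lip⟩
  obtain ⟨g, hgT, hfg⟩ := hT_net f hf
  have hg := hT_ball hgT
  have decomposition := abs_integral_sub_le_of_abs_sub_sub_sub_le
    (isBL_of_mem_lipschitzUnitBall hf) (isBL_of_mem_lipschitzUnitBall hg)
    (isBL_splice f hf) (isBL_splice g hg)
    (abs_sub_sub_splice_sub_splice_le hr.le hf₀ hf hg hfg hθ) (α n) (β n)
  have mass_le : 6 * r * ((α n).mass + (β n).mass) ≤ 6 * ε := by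
    have := mul_le_mul_of_nonneg_left (NNReal.coe_le_coe.2 (hM n)) hr.le
    push_cast at this
    linarith
  linarith [hn_net g hgT, hn_splice f hf, hn_splice g hg]

theorem tendsto_blDist_zero_of_forall_isBL_integral_sub_tendsto_zero {M : ℝ≥0}
    (hM : ∀ n, (α n).mass + (β n).mass ≤ M)
    (h : ∀ f : S → ℝ, IsBL f → Tendsto
      (fun n => ∫ x, f x ∂(α n : Measure S) - ∫ x, f x ∂(β n : Measure S)) atTop (𝓝 0)) :
    Tendsto (fun n => blDist (α n) (β n)) atTop (𝓝 0) := by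
  refine Metric.tendsto_nhds.2 fun ε hε => ?_
  filter_upwards [eventually_blDist_le hM h (ε := ε / 10) (by positivity)] with n hn
  rw [Real.dist_0_eq_abs, abs_of_nonneg (blDist_nonneg _ _)]
  linarith

lemma tendsto_integral_sub_zero_of_lipschitzWith {μs : ℕ → FiniteMeasure S}
    {μ : FiniteMeasure S} (hμ : Tendsto μs atTop (𝓝 μ))
    {g : ℕ → S → ℝ} {C : ℝ} {K : ℝ≥0} (hC : ∀ n x, |g n x| ≤ C) (hK : ∀ n, LipschitzWith K (g n)) :
    Tendsto (fun n => ∫ x, g n x ∂(μs n : Measure S) - ∫ x, g n x ∂(μ : Measure S)) atTop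
      (𝓝 0) := by
  obtain ⟨M, hM⟩ := (hμ.mass.add_const μ.mass).bddAbove_range
  have tendsto_blDist := tendsto_blDist_zero_of_forall_isBL_integral_sub_tendsto_zero
    (β := fun _ => μ) (fun n => hM ⟨n, rfl⟩) fun f hf => by
      obtain ⟨⟨D, hD⟩, L, hL⟩ := hf
      have := FiniteMeasure.tendsto_iff_forall_integral_tendsto.1 hμ
        (.ofNormedAddCommGroup f hL.continuous D hD)
      simpa using this.sub_const (∫ x, f x ∂(μ : Measure S))
  have hs : 0 < |C| + K + 1 := by positivity
  refine squeeze_zero_norm (fun n => abs_integral_sub_le_mul_blDist (hC n) (hK n) hs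
    (by linarith [le_abs_self C]) (μs n) μ) ?_
  simpa using tendsto_blDist.const_mul (|C| + K + 1)

end Schur

section Equicontinuous

variable {X : Type*} [TopologicalSpace X]

lemma continuous_ofNormedAddCommGroupDiscrete_of_equicontinuous {ι : Type*} [TopologicalSpace ι]
    [DiscreteTopology ι] {g : ι → X → ℝ} (hg : Equicontinuous g) {C : ℝ}
    (hC : ∀ x i, |g i x| ≤ C) :
    Continuous fun x =>
      BoundedContinuousFunction.ofNormedAddCommGroupDiscrete (fun i => g i x) C (hC x) := by
  refine continuous_iff_continuousAt.2 fun x₀ => Metric.tendsto_nhds.2 fun ε hε => ?_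
  filter_upwards [Metric.equicontinuousAt_iff_right.1 (hg x₀) (ε / 2) (by positivity)] with x hx
  refine lt_of_le_of_lt ?_ (half_lt_self hε)
  exact (BoundedContinuousFunction.dist_le (by positivity)).2 fun i => by
    simpa [dist_comm] using (hx i).le

variable [SeparableSpace X] [MeasurableSpace X] [OpensMeasurableSpace X]

theorem tendsto_integral_sub_zero_of_equicontinuous {μs : ℕ → FiniteMeasure X}
    {μ : FiniteMeasure X} (hμ : Tendsto μs atTop (𝓝 μ)) {g : ℕ → X → ℝ} (hg : Equicontinuous g)
    {C : ℝ} (hC : ∀ n x, |g n x| ≤ C) :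
    Tendsto (fun n => ∫ x, g n x ∂(μs n : Measure X) - ∫ x, g n x ∂(μ : Measure X)) atTop
      (𝓝 0) := by
  let F (x : X) : BoundedContinuousFunction ℕ ℝ :=
    .ofNormedAddCommGroupDiscrete (fun n => g n x) C fun n => hC n x
  have continuous_F : Continuous F :=
    continuous_ofNormedAddCommGroupDiscrete_of_equicontinuous hg _
  have : SeparableSpace (range F) := (isSeparable_range continuous_F).separableSpace
  borelize ↥(range F)
  let q : X → range F := rangeFactorization F
  have continuous_q : Continuous q := continuous_F.subtype_mk _
  let coord (n : ℕ) (y : range F) : ℝ := y.1 n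
  have abs_coord_le (n : ℕ) (y : range F) : |coord n y| ≤ C := by
    obtain ⟨_, x, rfl⟩ := y
    exact hC n x
  have lipschitz_coord (n : ℕ) : LipschitzWith 1 (coord n) := .of_dist_le_mul fun y z => by
    simpa using! BoundedContinuousFunction.dist_coe_le_dist (f := y.1) (g := z.1) n
  have integral_coord (n : ℕ) (ν : FiniteMeasure X) :
      ∫ y, coord n y ∂(ν.map q : Measure (range F)) = ∫ x, g n x ∂(ν : Measure X) :=
    integral_map continuous_q.measurable.aemeasurable
      (lipschitz_coord n).continuous.aestronglyMeasurable
  simpa only [integral_coord] using tendsto_integral_sub_zero_of_lipschitzWith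
    (FiniteMeasure.tendsto_map_of_tendsto_of_continuous μs μ hμ continuous_q) abs_coord_le
    lipschitz_coord

end Equicontinuous

/-- `P` is a regular Markov operator on finite measures and `U` is its dual operator. This is
encoded by mass preservation and the duality `∫ f d(P μ) = ∫ U f dμ` for bounded measurable `f`,
which force `P`, and `U` on bounded measurable functions, to be linear. -/
structure IsMarkovDual {S : Type*} [MeasurableSpace S] (P : FiniteMeasure S → FiniteMeasure S)
    (U : (S → ℝ) → S → ℝ) : Prop where
  mass_apply (μ : FiniteMeasure S) : (P μ).mass = μ.mass
  measurable {f : S → ℝ} (hf : Measurable f) (hf_bdd : ∃ C, ∀ x, |f x| ≤ C) : Measurable (U f)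
  integral_apply {f : S → ℝ} (hf : Measurable f) (hf_bdd : ∃ C, ∀ x, |f x| ≤ C)
    (μ : FiniteMeasure S) : ∫ x, f x ∂(P μ : Measure S) = ∫ x, U f x ∂(μ : Measure S)

namespace IsMarkovDual

variable {S : Type*} [MeasurableSpace S]

section Dual

variable {P : FiniteMeasure S → FiniteMeasure S} {U : (S → ℝ) → S → ℝ} {f : S → ℝ} {C : ℝ}

lemma integral_apply_diracProba (h : IsMarkovDual P U) (hf : Measurable f)
    (hf_bdd : ∃ C, ∀ x, |f x| ≤ C) (x : S) :
    ∫ y, f y ∂(P (diracProba x).toFiniteMeasure : Measure S) = U f x := by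
  rw [h.integral_apply hf hf_bdd, integral_diracProba (h.measurable hf hf_bdd)]

lemma abs_dual_le (h : IsMarkovDual P U) (hf : Measurable f) (hC : ∀ x, |f x| ≤ C) (x : S) :
    |U f x| ≤ C := by
  rw [← h.integral_apply_diracProba hf ⟨C, hC⟩]
  simpa [h.mass_apply] using abs_integral_le_mul_mass hC (P (diracProba x).toFiniteMeasure)

end Dual

variable [PseudoMetricSpace S] [OpensMeasurableSpace S] {Λ : Type*}
  {P : Λ → FiniteMeasure S → FiniteMeasure S} {U : Λ → (S → ℝ) → S → ℝ}

lemma equicontinuous_dual (h : ∀ l, IsMarkovDual (P l) (U l))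
    (hP : ∀ x₀ : S, ∀ ε > 0, ∀ᶠ x in 𝓝 x₀, ∀ l,
      blDist (P l (diracProba x).toFiniteMeasure) (P l (diracProba x₀).toFiniteMeasure) < ε)
    {f : S → ℝ} (hf : IsBL f) : Equicontinuous fun l => U l f := by
  obtain ⟨s, hs, abs_le_mul⟩ := hf.exists_abs_integral_sub_le_mul_blDist
  obtain ⟨hf_bdd, K, hK⟩ := hf
  refine fun x₀ => Metric.equicontinuousAt_iff_right.2 fun ε hε => ?_
  filter_upwards [hP x₀ (ε / s) (by positivity)] with x hx l
  rw [dist_comm, Real.dist_eq, ← (h l).integral_apply_diracProba hK.continuous.measurable hf_bdd,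
    ← (h l).integral_apply_diracProba hK.continuous.measurable hf_bdd]
  exact (abs_le_mul _ _).trans_lt ((lt_div_iff₀' hs).1 (hx l))

variable [SeparableSpace S]

lemma tendsto_blDist_zero (h : ∀ l, IsMarkovDual (P l) (U l))
    (hU : ∀ f : S → ℝ, IsBL f → Equicontinuous fun l => U l f) {μs : ℕ → FiniteMeasure S}
    {μ : FiniteMeasure S} (hμ : Tendsto μs atTop (𝓝 μ)) (ls : ℕ → Λ) :
    Tendsto (fun n => blDist (P (ls n) (μs n)) (P (ls n) μ)) atTop (𝓝 0) := by
  obtain ⟨M, hM⟩ := (hμ.mass.add_const μ.mass).bddAbove_range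
  refine tendsto_blDist_zero_of_forall_isBL_integral_sub_tendsto_zero (M := M) (fun n => ?_)
    fun f hf => ?_
  · simpa only [(h _).mass_apply] using hM ⟨n, rfl⟩
  · have equicontinuous_seq := (hU f hf).comp ls
    obtain ⟨⟨C, hC⟩, K, hK⟩ := hf
    have hf_meas : Measurable f := hK.continuous.measurable
    simpa only [(h _).integral_apply hf_meas ⟨C, hC⟩] using!
      tendsto_integral_sub_zero_of_equicontinuous hμ equicontinuous_seq
        fun n => (h (ls n)).abs_dual_le hf_meas hC

lemma eventually_forall_blDist_lt (h : ∀ l, IsMarkovDual (P l) (U l))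
    (hU : ∀ f : S → ℝ, IsBL f → Equicontinuous fun l => U l f) {ι : Type*} {L : Filter ι}
    [L.IsCountablyGenerated] {μs : ι → FiniteMeasure S} {μ : FiniteMeasure S}
    (hμ : Tendsto μs L (𝓝 μ)) {ε : ℝ} (hε : 0 < ε) :
    ∀ᶠ i in L, ∀ l, blDist (P l (μs i)) (P l μ) < ε := by
  by_contra h_not
  obtain ⟨is, tendsto_is, exists_le⟩ := exists_seq_forall_of_frequently (not_eventually.1 h_not)
  push Not at exists_le
  choose ls hls using exists_le
  exact hε.not_ge (ge_of_tendsto' (tendsto_blDist_zero h hU (hμ.comp tendsto_is) ls) hls)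

end IsMarkovDual

theorem equivalence_equicontinuity_general {S : Type*} [PseudoMetricSpace S] [SeparableSpace S]
    [MeasurableSpace S] [OpensMeasurableSpace S] {Λ : Type*}
    {P : Λ → FiniteMeasure S → FiniteMeasure S} {U : Λ → (S → ℝ) → S → ℝ}
    (h : ∀ l, IsMarkovDual (P l) (U l)) :
    List.TFAE [∀ f : S → ℝ, IsBL f → Equicontinuous fun l => U l f,
      ∀ μ₀ : FiniteMeasure S, ∀ ε : ℝ, 0 < ε → ∃ δ : ℝ, 0 < δ ∧
        ∀ (l : Λ) (μ : FiniteMeasure S), blDist μ μ₀ < δ → blDist (P l μ) (P l μ₀) < ε,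
      ∀ μ₀ : ProbabilityMeasure S, ∀ ε : ℝ, 0 < ε →
        ∃ V : Set (ProbabilityMeasure S), IsOpen V ∧ μ₀ ∈ V ∧
          ∀ (l : Λ), ∀ μ ∈ V, blDist (P l μ.toFiniteMeasure) (P l μ₀.toFiniteMeasure) < ε] := by
  tfae_have 1 → 2 := fun hU μ₀ ε hε => by
    have tendsto_weak : Tendsto id (comap (blDist · μ₀) (𝓝 0)) (𝓝 μ₀) :=
      tendsto_of_tendsto_blDist_zero tendsto_comap
    obtain ⟨δ, hδ, hδε⟩ := (Metric.nhds_basis_ball.comap _).eventually_iff.1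
      (IsMarkovDual.eventually_forall_blDist_lt h hU tendsto_weak hε)
    exact ⟨δ, hδ, fun l μ hμ => hδε (by simpa [abs_of_nonneg (blDist_nonneg _ _)] using hμ) l⟩
  tfae_have 1 → 3 := fun hU μ₀ ε hε => by
    have := UniformSpace.secondCountable_of_separable S
    obtain ⟨V, hVε, hV, hμ₀⟩ := eventually_nhds_iff.1 <|
      IsMarkovDual.eventually_forall_blDist_lt h hU
        ((ProbabilityMeasure.tendsto_nhds_iff_toFiniteMeasure_tendsto_nhds _).1 tendsto_id) hε
    exact ⟨V, hV, hμ₀, fun l μ hμ => hVε μ hμ l⟩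
  tfae_have 2 → 1 := fun hP f => IsMarkovDual.equicontinuous_dual h fun x₀ ε hε => by
    obtain ⟨δ, hδ, hδε⟩ := hP (diracProba x₀).toFiniteMeasure ε hε
    filter_upwards [Metric.ball_mem_nhds x₀ hδ] with x hx l
    exact hδε l _ ((blDist_diracProba_le_dist x x₀).trans_lt hx)
  tfae_have 3 → 1 := fun hP f => IsMarkovDual.equicontinuous_dual h fun x₀ ε hε => by
    obtain ⟨V, hV, hx₀, hVε⟩ := hP (diracProba x₀) ε hε
    filter_upwards [continuous_diracProba.continuousAt (hV.mem_nhds hx₀)] with x hx l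
    exact hVε l _ hx
  tfae_finish

/-- **Equivalence of equicontinuity notions for families of regular Markov operators.**
Given a family `(P_λ)` of regular Markov operators on a complete separable metric space, with
dual operators `U_λ`, the following are equivalent:
(i) for every bounded Lipschitz `f`, the family `{U_λ f}` is equicontinuous;
(ii) `{P_λ}` is equicontinuous as a family of maps of `M⁺(S)` with the `‖·‖*_BL`-metric;
(iii) `{P_λ}` is equicontinuous as a family of maps from `P(S)` with the weak (narrow) topology
to `P(S)` with the `‖·‖*_BL`-metric. -/
theorem equivalence_equicontinuity {S : Type*} [MetricSpace S] [CompleteSpace S]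
    [TopologicalSpace.SeparableSpace S] [MeasurableSpace S] [BorelSpace S] {Λ : Type*}
    (P : Λ → FiniteMeasure S → FiniteMeasure S)
    (U : Λ → (S → ℝ) → (S → ℝ))
    -- each `P l` is a Markov operator:
    (hadd : ∀ l (μ ν : FiniteMeasure S), P l (μ + ν) = P l μ + P l ν)
    (hsmul : ∀ l (r : NNReal) (μ : FiniteMeasure S), P l (r • μ) = r • P l μ)
    (hmass : ∀ l (μ : FiniteMeasure S), (P l μ) Set.univ = μ Set.univ)
    -- `U l` is the dual operator of `P l`: it is linear on bounded measurable functions, maps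
    -- them to bounded measurable functions, and satisfies `∫ f d(P_λ μ) = ∫ (U_λ f) dμ`:
    (hUlin : ∀ l (c : ℝ) (f g : S → ℝ), Measurable f → (∃ C : ℝ, ∀ x, |f x| ≤ C) →
      Measurable g → (∃ C : ℝ, ∀ x, |g x| ≤ C) →
      U l (fun x => c * f x + g x) = fun x => c * U l f x + U l g x)
    (hdual : ∀ l (f : S → ℝ), Measurable f → (∃ C : ℝ, ∀ x, |f x| ≤ C) →
      Measurable (U l f) ∧ (∃ C : ℝ, ∀ x, |U l f x| ≤ C) ∧
      ∀ μ : FiniteMeasure S, ∫ x, f x ∂(P l μ : Measure S) = ∫ x, U l f x ∂(μ : Measure S)) :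
    -- (i) ↔ (ii) ↔ (iii):
    ((∀ f : S → ℝ, IsBL f → Equicontinuous (fun l : Λ => U l f)) ↔
      (∀ μ₀ : FiniteMeasure S, ∀ ε : ℝ, 0 < ε → ∃ δ : ℝ, 0 < δ ∧
        ∀ (l : Λ) (μ : FiniteMeasure S), blDist μ μ₀ < δ → blDist (P l μ) (P l μ₀) < ε)) ∧
    ((∀ μ₀ : FiniteMeasure S, ∀ ε : ℝ, 0 < ε → ∃ δ : ℝ, 0 < δ ∧
        ∀ (l : Λ) (μ : FiniteMeasure S), blDist μ μ₀ < δ → blDist (P l μ) (P l μ₀) < ε) ↔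
      (∀ μ₀ : ProbabilityMeasure S, ∀ ε : ℝ, 0 < ε →
        ∃ V : Set (ProbabilityMeasure S), IsOpen V ∧ μ₀ ∈ V ∧
          ∀ (l : Λ), ∀ μ ∈ V, blDist (P l μ.toFiniteMeasure) (P l μ₀.toFiniteMeasure) < ε)) := by
  have tfae := equivalence_equicontinuity_general (P := P) (U := U) fun l =>
    ⟨hmass l, fun hf hC => (hdual l _ hf hC).1, fun hf hC => (hdual l _ hf hC).2.2⟩
  exact ⟨tfae.out 0 1, tfae.out 1 2⟩
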